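/- arXiv:0812.1064 — 2 statements merged into one kernel-verified Lean document; each statement's English description precedes it below -/
import Mathlib

section
/- A finite simple graph G belongs to D̂_3 if and only if G is isomorphic to the complete graph K_5 or to the complete tripartite graph K_{2,2,2} (the octahedron). -/
open SimpleGraph

/-- The degree of a vertex in a finite simple graph. -/
noncomputable def degC {V : Type} [Fintype V] (G : SimpleGraph V) (v : V) : ℕ := by
  classical exact G.degree v

/-- The minimum degree of a finite simple graph. -/
noncomputable def minDegC {V : Type} [Fintype V] (G : SimpleGraph V) : ℕ := by
  classical exact G.minDegree

/-- `H` is a minor of `G`: there is a family of nonempty, pairwise disjoint,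
connected branch sets, one for each vertex of `H`, such that every edge of `H`
is realised by an edge of `G` between the corresponding branch sets. -/
def IsMinorOf {W V : Type} (H : SimpleGraph W) (G : SimpleGraph V) : Prop :=
  ∃ B : W → Set V,
    (∀ w, (B w).Nonempty) ∧
    (∀ u w : W, u ≠ w → Disjoint (B u) (B w)) ∧
    (∀ w, (G.induce (B w)).Connected) ∧
    (∀ ⦃u w : W⦄, H.Adj u w → ∃ a ∈ B u, ∃ b ∈ B w, G.Adj a b)

/-- `H` is a proper minor of `G`: a minor that is not isomorphic to `G`. -/
def IsProperMinorOf {W V : Type} (H : SimpleGraph W) (G : SimpleGraph V) : Prop :=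
  IsMinorOf H G ∧ ¬ Nonempty (H ≃g G)

/-- `G ∈ D_k`: every minor of `G` has minimum degree at most `k`. -/
def MemD (k : ℕ) {V : Type} (G : SimpleGraph V) : Prop :=
  ∀ (W : Type) [Fintype W] (H : SimpleGraph W), IsMinorOf H G → minDegC H ≤ k

/-- `G ∈ D̂_k`: `G ∉ D_k` but every proper minor of `G` is in `D_k`. -/
def MemDHat (k : ℕ) {V : Type} (G : SimpleGraph V) : Prop :=
  ¬ MemD k G ∧ ∀ (W : Type) [Fintype W] (H : SimpleGraph W), IsProperMinorOf H G → MemD k H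

/-!
A graph outside `D_3` has a minor of minimum degree at least four; the point is that every such
graph has a `K_5` or a `K_{2,2,2}` minor. Relax the degree condition by exempting the vertices of a
clique of size at most three, and pass to a minor with as few vertices as possible among those
satisfying the relaxed condition. Contracting an edge `uv` lowers only the degrees of the common
neighbours of `u` and `v`, so minimality forces all degrees to be at least four, puts every edge in
two triangles, and yields a vertex `v` of degree exactly four. If the neighbours of `v` form a
clique, then they form a `K_5` with `v`. Otherwise they contain a 4-cycle `a b c d` with `a` and
`c` nonadjacent. Let `R` be a component of what remains after deleting `v` and its neighbours. If
`R` missed one of the four neighbours, then the other three would contain a path, which contracting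
`v` turns into an exempt triangle in the smaller minor spanned by `R` and these three, against
minimality. So `R` is joined to all four neighbours, and contracting it to a vertex opposite `v`
gives the octahedron.

Neither of the two graphs is a minor of the other: the octahedron has more vertices than `K_5`, and
it is 3-colourable, so that the branch sets of a `K_n` minor include at most three singletons.
-/

section Copies

variable {W V : Type*}

theorem nonempty_iso_of_isContained_of_isContained [Finite W] [Finite V] {H : SimpleGraph W}
    {G : SimpleGraph V} (h : H ⊑ G) (h' : G ⊑ H) : Nonempty (H ≃g G) := by
  obtain ⟨f⟩ := h
  obtain ⟨g⟩ := h'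
  have hf : Function.Bijective f :=
    f.injective.bijective_of_nat_card_le (Nat.card_le_card_of_injective g g.injective)
  have hfe : Function.Bijective f.toHom.mapEdgeSet :=
    (Hom.mapEdgeSet.injective f.toHom f.injective).bijective_of_nat_card_le
      (Nat.card_le_card_of_injective _ (Hom.mapEdgeSet.injective g.toHom g.injective))
  refine ⟨⟨Equiv.ofBijective f hf, fun {u v} ↦ ⟨fun huv ↦ ?_, f.toHom.map_adj⟩⟩⟩
  obtain ⟨⟨e, he⟩, hfe'⟩ := hfe.2 ⟨s(f u, f v), huv⟩
  have : e = s(u, v) := Sym2.map.injective f.injective (congrArg Subtype.val hfe')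
  rwa [← mem_edgeSet, ← this]

theorem connected_induce_singleton (G : SimpleGraph V) (v : V) : (G.induce {v}).Connected := by
  rw [connected_iff_exists_forall_reachable]
  refine ⟨⟨v, rfl⟩, ?_⟩
  rintro ⟨w, rfl⟩
  rfl

theorem connected_induce_componentCompl {G : SimpleGraph V} {K : Set V} (C : G.ComponentCompl K) :
    (G.induce (C : Set V)).Connected := by
  let f : C.toSimpleGraph →g G.induce (C : Set V) :=
    { toFun := fun x ↦ ⟨x.1, x.1.2, x.2⟩
      map_rel' := id }
  exact C.connected_toSimpleGraph.map f fun ⟨x, hxK, hx⟩ ↦ ⟨⟨⟨x, hxK⟩, hx⟩, rfl⟩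

theorem exists_connected_induce_disjoint {G : SimpleGraph V} {K : Set V} {x : V} (hx : x ∉ K) :
    ∃ R : Set V, (G.induce R).Connected ∧ Disjoint R K ∧
      ∀ w ∈ R, ∀ y, G.Adj w y → y ∈ R ∨ y ∈ K := by
  let C := G.componentComplMk hx
  refine ⟨C, connected_induce_componentCompl C, Set.disjoint_left.2 fun y hy ↦
    C.notMem_of_mem hy, fun w hw y hwy ↦ ?_⟩
  by_cases hy : y ∈ K
  · exact .inr hy
  · exact .inl (C.mem_of_adj w y hw hy hwy)

theorem connected_induce_biUnion {H : SimpleGraph W} {G : SimpleGraph V} {A : Set W}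
    {B : W → Set V} (hA : (H.induce A).Connected) (hB : ∀ w ∈ A, (G.induce (B w)).Connected)
    (hadj : ∀ ⦃u w⦄, H.Adj u w → ∃ a ∈ B u, ∃ b ∈ B w, G.Adj a b) :
    (G.induce (⋃ w ∈ A, B w)).Connected := by
  have mem {w} (hw : w ∈ A) {v} (hv : v ∈ B w) : v ∈ ⋃ w ∈ A, B w := Set.mem_biUnion hw hv
  have within {w} (hw : w ∈ A) {a b} (ha : a ∈ B w) (hb : b ∈ B w) :
      (G.induce (⋃ w ∈ A, B w)).Reachable ⟨a, mem hw ha⟩ ⟨b, mem hw hb⟩ :=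
    ((hB w hw).preconnected ⟨a, ha⟩ ⟨b, hb⟩).map (induceHomOfLE G fun _ ↦ mem hw).toHom
  have along {w w' : A} (p : (H.induce A).Walk w w') : ∀ {a b} (ha : a ∈ B w) (hb : b ∈ B w'),
      (G.induce (⋃ w ∈ A, B w)).Reachable ⟨a, mem w.2 ha⟩ ⟨b, mem w'.2 hb⟩ := by
    induction p with
    | nil => exact within (Subtype.prop _)
    | @cons x y z hxy _ ih =>
      intro a b ha hb
      obtain ⟨c, hc, d, hd, hcd⟩ := hadj (show H.Adj x y from hxy)
      have hstep : (G.induce (⋃ w ∈ A, B w)).Adj ⟨c, mem x.2 hc⟩ ⟨d, mem y.2 hd⟩ := hcd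
      exact (within x.2 ha hc).trans (hstep.reachable.trans (ih hd hb))
  obtain ⟨⟨w, hw⟩⟩ := hA.nonempty
  obtain ⟨⟨v, hv⟩⟩ := (hB w hw).nonempty
  rw [connected_iff_exists_forall_reachable]
  refine ⟨⟨v, mem hw hv⟩, ?_⟩
  rintro ⟨x, hx⟩
  obtain ⟨w', hw', hx'⟩ := Set.mem_iUnion₂.1 hx
  obtain ⟨p⟩ := hA.preconnected ⟨w, hw⟩ ⟨w', hw'⟩
  exact along p hv hx'

end Copies

section Minors

variable {U W V : Type} {H : SimpleGraph W} {G : SimpleGraph V}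

theorem IsMinorOf.of_isContained (h : H ⊑ G) : IsMinorOf H G := by
  obtain ⟨f⟩ := h
  exact ⟨fun w ↦ {f w}, fun w ↦ Set.singleton_nonempty _,
    fun u w huw ↦ Set.disjoint_singleton.2 (f.injective.ne huw),
    fun w ↦ connected_induce_singleton G _,
    fun u w huw ↦ ⟨_, rfl, _, rfl, f.toHom.map_adj huw⟩⟩

theorem IsMinorOf.refl (G : SimpleGraph V) : IsMinorOf G G :=
  .of_isContained (.refl G)

theorem IsMinorOf.of_iso (e : H ≃g G) : IsMinorOf H G :=
  .of_isContained ⟨e.toCopy⟩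

theorem IsMinorOf.induce (G : SimpleGraph V) (s : Set V) : IsMinorOf (G.induce s) G :=
  .of_isContained ⟨(Embedding.induce s).toCopy⟩

theorem IsMinorOf.trans {K : SimpleGraph U} (h₁ : IsMinorOf K H) (h₂ : IsMinorOf H G) :
    IsMinorOf K G := by
  obtain ⟨A, hA, hAd, hAc, hAe⟩ := h₁
  obtain ⟨B, hB, hBd, hBc, hBe⟩ := h₂
  refine ⟨fun u ↦ ⋃ w ∈ A u, B w, fun u ↦ ?_, fun u u' huu' ↦ ?_,
    fun u ↦ connected_induce_biUnion (hAc u) (fun w _ ↦ hBc w) hBe, fun u u' huu' ↦ ?_⟩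
  · obtain ⟨w, hw⟩ := hA u
    obtain ⟨v, hv⟩ := hB w
    exact ⟨v, Set.mem_biUnion hw hv⟩
  · simp only [Set.disjoint_iUnion_left, Set.disjoint_iUnion_right]
    exact fun w hw w' hw' ↦ hBd _ _ (Set.disjoint_iff_forall_ne.1 (hAd u u' huu') hw' hw)
  · obtain ⟨w, hw, w', hw', h⟩ := hAe huu'
    obtain ⟨a, ha, b, hb, hab⟩ := hBe h
    exact ⟨a, Set.mem_biUnion hw ha, b, Set.mem_biUnion hw' hb, hab⟩

theorem IsMinorOf.exists_representatives (h : IsMinorOf H G) :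
    ∃ f : W → V, Function.Injective f ∧
      (Function.Surjective f → ∀ ⦃u w⦄, H.Adj u w → G.Adj (f u) (f w)) := by
  obtain ⟨B, hB, hdisj, -, hadj⟩ := h
  choose f hf using hB
  have heq {u w} (hu : f u ∈ B w) : u = w :=
    by_contra fun hne ↦ Set.disjoint_left.1 (hdisj u w hne) (hf u) hu
  refine ⟨f, fun u w huw ↦ heq (huw ▸ hf w), fun hsurj u w huw ↦ ?_⟩
  obtain ⟨x, hx, y, hy, hxy⟩ := hadj huw
  obtain ⟨u', rfl⟩ := hsurj x
  obtain ⟨w', rfl⟩ := hsurj y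
  rwa [heq hx, heq hy] at hxy

theorem IsMinorOf.card_le [Finite V] (h : IsMinorOf H G) : Nat.card W ≤ Nat.card V := by
  obtain ⟨f, hf, -⟩ := h.exists_representatives
  exact Nat.card_le_card_of_injective f hf

theorem IsMinorOf.isContained_of_card_le [Finite V] (h : IsMinorOf H G)
    (hcard : Nat.card V ≤ Nat.card W) : H ⊑ G := by
  obtain ⟨f, hf, hadj⟩ := h.exists_representatives
  exact ⟨⟨⟨f, fun huw ↦ hadj (hf.bijective_of_nat_card_le hcard).2 huw⟩, hf⟩⟩

theorem IsMinorOf.nonempty_iso_of_isMinorOf [Finite W] [Finite V] (h : IsMinorOf H G)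
    (h' : IsMinorOf G H) : Nonempty (H ≃g G) :=
  nonempty_iso_of_isContained_of_isContained (h.isContained_of_card_le h'.card_le)
    (h'.isContained_of_card_le h.card_le)

/- A branch set with two vertices is charged to both of them, and a singleton branch set to its
vertex and the colour of that vertex. -/
theorem IsMinorOf.two_mul_card_le_of_coloring [Finite V] {α : Type*} [Finite α]
    (h : IsMinorOf (⊤ : SimpleGraph W) G) (C : G.Coloring α) :
    2 * Nat.card W ≤ Nat.card V + Nat.card α := by
  classical
  obtain ⟨B, hB, hdisj, -, hadj⟩ := h
  choose f hf using hB
  have heq {u w v} (hu : v ∈ B u) (hw : v ∈ B w) : u = w :=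
    by_contra fun hne ↦ Set.disjoint_left.1 (hdisj u w hne) hu hw
  have hcharge (w : W) : ∃ c : V ⊕ α, (∃ y ∈ B w, y ≠ f w ∧ c = .inl y) ∨
      (B w = {f w} ∧ c = .inr (C (f w))) := by
    by_cases hw : ∃ y ∈ B w, y ≠ f w
    · obtain ⟨y, hy, hne⟩ := hw
      exact ⟨.inl y, .inl ⟨y, hy, hne, rfl⟩⟩
    · push Not at hw
      exact ⟨.inr (C (f w)), .inr ⟨Set.eq_singleton_iff_unique_mem.2 ⟨hf w, hw⟩, rfl⟩⟩
  choose c hc using hcharge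
  have hcolor {u w} (hu : B u = {f u}) (hw : B w = {f w}) (h : C (f u) = C (f w)) : u = w := by
    by_contra hne
    obtain ⟨x, hx, y, hy, hxy⟩ := hadj ((top_adj u w).2 hne)
    rw [hu, Set.mem_singleton_iff] at hx
    rw [hw, Set.mem_singleton_iff] at hy
    exact C.valid (hx ▸ hy ▸ hxy) h
  have hinj : Function.Injective (Sum.elim (fun w ↦ Sum.inl (f w)) c : W ⊕ W → V ⊕ α) := by
    refine Function.Injective.sumElim (fun u w huw ↦ ?_) (fun u w huw ↦ ?_) fun u w ↦ ?_
    · exact heq (hf u) (Sum.inl_injective huw ▸ hf w)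
    · grind
    · grind
  have : Finite W := .of_injective f fun u w huw ↦ heq (hf u) (huw ▸ hf w)
  simpa [two_mul] using Nat.card_le_card_of_injective _ hinj

end Minors

section SmallMinors

variable {V : Type} {G : SimpleGraph V} {v : V}

theorem isMinorOf_top_of_isClique_neighborSet [Finite V]
    (hv : G.IsClique (G.neighborSet v)) :
    IsMinorOf (⊤ : SimpleGraph (Fin ((G.neighborSet v).ncard + 1))) G := by
  have hclique : G.IsClique (insert v (G.neighborSet v)) := hv.insert fun w hw _ ↦ hw
  have hcard := Set.ncard_insert_of_notMem (G.notMem_neighborSet_self (a := v))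
  rw [Set.ncard_eq_toFinset_card _ (Set.toFinite _)] at hcard
  have hn : G.IsNClique _ (Set.toFinite (insert v (G.neighborSet v))).toFinset :=
    ⟨by simpa using hclique, hcard⟩
  exact .of_isContained ⟨(topEmbeddingOfNotCliqueFree hn.not_cliqueFree).toCopy⟩

theorem isMinorOf_completeMultipartiteGraph {ι : Type} [LinearOrder ι] {α : ι → Type}
    {B : ∀ i, α i → Set V} (hne : ∀ i k, (B i k).Nonempty)
    (hconn : ∀ i k, (G.induce (B i k)).Connected)
    (hsame : ∀ i k l, k ≠ l → Disjoint (B i k) (B i l))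
    (hdisj : ∀ i j, i < j → ∀ k l, Disjoint (B i k) (B j l))
    (hadj : ∀ i j, i < j → ∀ k l, ∃ x ∈ B i k, ∃ y ∈ B j l, G.Adj x y) :
    IsMinorOf (completeMultipartiteGraph α) G := by
  refine ⟨fun x ↦ B x.1 x.2, fun x ↦ hne _ _, ?_, fun x ↦ hconn _ _, ?_⟩
  · rintro ⟨i, k⟩ ⟨j, l⟩ hne
    obtain hij | rfl | hij := lt_trichotomy i j
    · exact hdisj i j hij k l
    · exact hsame i k l fun hkl ↦ hne (hkl ▸ rfl)
    · exact (hdisj j i hij l k).symm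
  · rintro ⟨i, k⟩ ⟨j, l⟩ hne
    obtain hij | hij := lt_or_gt_of_ne (show i ≠ j from hne)
    · exact hadj i j hij k l
    · obtain ⟨x, hx, y, hy, hxy⟩ := hadj j i hij l k
      exact ⟨y, hy, x, hx, hxy.symm⟩

theorem isMinorOf_octahedron_of_adj {s t : Fin 2 → V} {R : Set V}
    (hs : s.Injective) (ht : t.Injective)
    (hst : ∀ i j, G.Adj (s i) (t j)) (hvs : ∀ i, G.Adj v (s i)) (hvt : ∀ i, G.Adj v (t i))
    (hR : (G.induce R).Connected) (hvR : v ∉ R) (hsR : ∀ i, s i ∉ R) (htR : ∀ i, t i ∉ R)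
    (hsR' : ∀ i, ∃ x ∈ R, G.Adj (s i) x) (htR' : ∀ i, ∃ x ∈ R, G.Adj (t i) x) :
    IsMinorOf (completeMultipartiteGraph fun _ : Fin 3 ↦ Fin 2) G := by
  let B : Fin 3 → Fin 2 → Set V
    | 0, 0 => {v}
    | 0, 1 => R
    | 1, i => {s i}
    | 2, i => {t i}
  have hdisj {u} (hvu : G.Adj v u) (huR : u ∉ R) (k) : Disjoint (B 0 k) {u} := by
    fin_cases k
    · exact Set.disjoint_singleton.2 hvu.ne
    · exact Set.disjoint_singleton_right.2 huR
  have hadj {u} (hvu : G.Adj v u) (huR : ∃ x ∈ R, G.Adj u x) (k) :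
      ∃ x ∈ B 0 k, ∃ y ∈ ({u} : Set V), G.Adj x y := by
    obtain ⟨x, hx, hux⟩ := huR
    fin_cases k
    · exact ⟨v, rfl, u, rfl, hvu⟩
    · exact ⟨x, hx, u, rfl, hux.symm⟩
  refine isMinorOf_completeMultipartiteGraph (B := B) ?_ ?_ ?_ ?_ ?_
  · intro i k
    have := Set.nonempty_coe_sort.1 hR.nonempty
    fin_cases i <;> fin_cases k <;> simp [B, this]
  · intro i k
    fin_cases i <;> fin_cases k <;> first | exact hR | exact connected_induce_singleton G _
  · intro i k l hkl
    fin_cases i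
    · fin_cases k <;> fin_cases l <;> simp_all [B]
    · exact Set.disjoint_singleton.2 (hs.ne hkl)
    · exact Set.disjoint_singleton.2 (ht.ne hkl)
  · intro i j hij k l
    fin_cases i <;> fin_cases j <;> (try exact absurd hij (by decide))
    · exact hdisj (hvs l) (hsR l) k
    · exact hdisj (hvt l) (htR l) k
    · exact Set.disjoint_singleton.2 (hst k l).ne
  · intro i j hij k l
    fin_cases i <;> fin_cases j <;> (try exact absurd hij (by decide))
    · exact hadj (hvs l) (hsR' l) k
    · exact hadj (hvt l) (htR' l) k
    · exact ⟨s k, rfl, t l, rfl, hst k l⟩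

end SmallMinors

section Absorption

variable {V : Type} {G : SimpleGraph V} {u v : V} {K : Set V}

/-- The graph obtained from `G` by joining `v` to all neighbours of `u`. If `u` and `v` are
adjacent, then deleting `u` from it gives the graph obtained from `G` by contracting the edge `uv`
into `v`; keeping `u` around makes it possible to compare degrees without changing the type. -/
def absorb (G : SimpleGraph V) (u v : V) : SimpleGraph V :=
  G ⊔ fromRel fun x y ↦ x = v ∧ G.Adj u y

theorem le_absorb (G : SimpleGraph V) (u v : V) : G ≤ absorb G u v :=
  le_sup_left

theorem absorb_adj_of_adj {w : V} (hw : G.Adj u w) (hwv : w ≠ v) : (absorb G u v).Adj w v :=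
  .inr ⟨hwv, .inr ⟨rfl, hw⟩⟩

theorem isMinorOf_induce_absorb (huv : G.Adj u v) (hu : u ∉ K) :
    IsMinorOf ((absorb G u v).induce K) G := by
  classical
  have hne {x : V} (hx : x ∈ K) : x ≠ u := by grind
  refine ⟨fun x ↦ if x.1 = v then {v, u} else {x.1}, fun x ↦ ?_, ?_, fun x ↦ ?_, ?_⟩
  · dsimp only
    split_ifs <;> simp
  · rintro ⟨x, hx⟩ ⟨y, hy⟩ hxy
    have := hne hx
    have := hne hy
    have : x ≠ y := by simpa using hxy
    rw [Set.disjoint_left]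
    grind
  · dsimp only
    by_cases hx : x.1 = v
    · rw [if_pos hx]
      exact induce_pair_connected_of_adj huv.symm
    · rw [if_neg hx]
      exact connected_induce_singleton G _
  · rintro ⟨x, hx⟩ ⟨y, hy⟩ (h | ⟨-, ⟨rfl, h⟩ | ⟨rfl, h⟩⟩)
    · exact ⟨x, by grind, y, by grind, h⟩
    · exact ⟨u, by simp, y, by grind, h⟩
    · exact ⟨x, by grind, u, by simp, h.symm⟩

theorem ncard_neighborSet_le_absorb_add_one [Finite V] (G : SimpleGraph V) (u v w : V) :
    (G.neighborSet w).ncard ≤ ((absorb G u v).neighborSet w ∩ {u}ᶜ).ncard + 1 := by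
  have hsub : G.neighborSet w \ {u} ⊆ (absorb G u v).neighborSet w ∩ {u}ᶜ :=
    fun x hx ↦ ⟨le_absorb G u v hx.1, hx.2⟩
  have := Set.ncard_le_ncard hsub
  have := Set.pred_ncard_le_ncard_sdiff_singleton (G.neighborSet w) u
  omega

theorem ncard_neighborSet_le_absorb [Finite V] {w : V} (hwv : w ≠ v)
    (hw : G.Adj u w → ¬ G.Adj w v) :
    (G.neighborSet w).ncard ≤ ((absorb G u v).neighborSet w ∩ {u}ᶜ).ncard := by
  by_cases hwu : G.Adj u w
  · have hvu : v ≠ u := fun h ↦ hw hwu (h ▸ hwu.symm)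
    have hv : v ∉ G.neighborSet w := hw hwu
    have hu : u ∈ G.neighborSet w := hwu.symm
    rw [← Set.ncard_exchange hv hu]
    refine Set.ncard_le_ncard (Set.insert_subset ⟨absorb_adj_of_adj hwu hwv, hvu⟩ ?_)
    exact fun x hx ↦ ⟨le_absorb G u v hx.1, hx.2⟩
  · refine Set.ncard_le_ncard fun x hx ↦ ⟨le_absorb G u v hx, ?_⟩
    rintro rfl
    exact hwu hx.symm

end Absorption

section Exempt

variable {V : Type} {G : SimpleGraph V} {X Y K : Set V} {u v x : V}

/-- A clique of at most three vertices outside of which there is a vertex, and outside of which all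
degrees are at least four; the degrees of its own vertices are exempt from this bound. -/
structure IsExemptClique (G : SimpleGraph V) (X : Set V) : Prop where
  isClique : G.IsClique X
  ncard_le : X.ncard ≤ 3
  exists_notMem : ∃ w, w ∉ X
  four_le : ∀ w ∉ X, 4 ≤ (G.neighborSet w).ncard

theorem isExemptClique_induce [Finite V] (hY : G.IsClique Y) (hcard : Y.ncard ≤ 3)
    (hne : (K \ Y).Nonempty) (hdeg : ∀ w ∈ K \ Y, 4 ≤ (G.neighborSet w ∩ K).ncard) :
    IsExemptClique (G.induce K) ((↑) ⁻¹' Y : Set K) where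
  isClique := fun x hx y hy hxy ↦ hY hx hy (Subtype.coe_injective.ne hxy)
  ncard_le := by
    rw [← Set.ncard_image_of_injective _ Subtype.coe_injective]
    exact (Set.ncard_le_ncard (Set.image_preimage_subset _ _)).trans hcard
  exists_notMem := by
    obtain ⟨w, hwK, hwY⟩ := hne
    exact ⟨⟨w, hwK⟩, hwY⟩
  four_le := by
    rintro ⟨w, hwK⟩ hwY
    have himage : (↑) '' (G.induce K).neighborSet ⟨w, hwK⟩ = G.neighborSet w ∩ K := by
      ext x
      simp [and_comm]
    rw [← Set.ncard_image_of_injective _ Subtype.coe_injective, himage]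
    exact hdeg w ⟨hwK, hwY⟩

theorem IsExemptClique.mono (hX : IsExemptClique G X) (hXY : X ⊆ Y)
    (hY : G.IsClique Y) (hcard : Y.ncard ≤ 3) (hne : ∃ w, w ∉ Y) : IsExemptClique G Y :=
  ⟨hY, hcard, hne, fun w hw ↦ hX.four_le w fun hwX ↦ hw (hXY hwX)⟩

theorem isExemptClique_empty_iff :
    IsExemptClique G ∅ ↔ Nonempty V ∧ ∀ v, 4 ≤ (G.neighborSet v).ncard :=
  ⟨fun h ↦ ⟨h.exists_notMem.nonempty, fun v ↦ h.four_le v (by simp)⟩,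
    fun ⟨⟨v⟩, h⟩ ↦ ⟨by simp, by simp, ⟨v, by simp⟩, fun v _ ↦ h v⟩⟩

/-- A graph with an exempt clique none of whose minors with an exempt clique has fewer vertices. -/
structure IsExemptMinimal (G : SimpleGraph V) : Prop where
  exists_isExemptClique : ∃ X, IsExemptClique G X
  card_le : ∀ ⦃W : Type⦄ [Finite W] ⦃H : SimpleGraph W⦄ ⦃X : Set W⦄, IsMinorOf H G →
    IsExemptClique H X → Nat.card V ≤ Nat.card W

theorem IsExemptClique.exists_isExemptMinimal [Finite V] (hX : IsExemptClique G X) :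
    ∃ (W : Type) (_ : Finite W) (H : SimpleGraph W), IsMinorOf H G ∧ IsExemptMinimal H := by
  classical
  have hex : ∃ n, ∃ (W : Type) (_ : Finite W) (H : SimpleGraph W) (Y : Set W),
      IsMinorOf H G ∧ IsExemptClique H Y ∧ Nat.card W = n :=
    ⟨_, V, ‹_›, G, X, .refl G, hX, rfl⟩
  obtain ⟨W, hW, H, Y, hHG, hY, hcard⟩ := Nat.find_spec hex
  refine ⟨W, hW, H, hHG, ⟨Y, hY⟩, fun U hU K Z hKH hZ ↦ ?_⟩
  rw [hcard]
  exact Nat.find_min' hex ⟨U, hU, K, Z, hKH.trans hHG, hZ, rfl⟩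

namespace IsExemptMinimal

variable [Finite V] (hG : IsExemptMinimal G)
include hG

theorem exists_ncard_lt_of_isMinorOf {H : SimpleGraph V} (hH : IsMinorOf (H.induce K) G)
    (hv : v ∉ K) (hY : H.IsClique Y) (hcard : Y.ncard ≤ 3) (hne : (K \ Y).Nonempty) :
    ∃ w ∈ K \ Y, (H.neighborSet w ∩ K).ncard < 4 := by
  by_contra! h
  have hlt : Nat.card K < Nat.card V :=
    Set.ncard_lt_card ((Set.ne_univ_iff_exists_notMem K).2 ⟨v, hv⟩)
  exact (hG.card_le hH (isExemptClique_induce hY hcard hne h)).not_gt hlt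

theorem exists_ncard_lt_of_adj (huv : G.Adj u v) (hv : v ∈ Y) (hY : G.IsClique Y)
    (hcard : Y.ncard ≤ 3) (hne : ∃ w ∉ Y, w ≠ u) :
    ∃ w ∉ Y, w ≠ u ∧ ((G.neighborSet w).ncard < 4 ∨
      G.Adj u w ∧ G.Adj w v ∧ (G.neighborSet w).ncard ≤ 4) := by
  obtain ⟨x, hxY, hxu⟩ := hne
  obtain ⟨w, ⟨hwu, hwY⟩, hlt⟩ := hG.exists_ncard_lt_of_isMinorOf (v := u) (K := {u}ᶜ)
    (isMinorOf_induce_absorb huv (by simp)) (by simp) (hY.mono (le_absorb G u v)) hcard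
    ⟨x, hxu, hxY⟩
  refine ⟨w, hwY, hwu, ?_⟩
  have hle := ncard_neighborSet_le_absorb_add_one G u v w
  by_contra! h
  have hle' := ncard_neighborSet_le_absorb (G := G) (u := u) (ne_of_mem_of_not_mem hv hwY).symm
    fun huw hwv ↦ by have := h.2 huw hwv; omega
  omega

theorem exists_adj_adj_of_adj_mem {s : V} (hX : IsExemptClique G X) (hx : x ∈ X)
    (hxs : G.Adj x s) : ∃ w ∉ X, G.Adj x w ∧ G.Adj s w := by
  have hne : ∃ w ∉ X, w ≠ s := by
    obtain ⟨w, hwX⟩ := hX.exists_notMem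
    by_cases hws : w = s
    · subst hws
      obtain ⟨y, hy, hyX⟩ :=
        Set.exists_mem_notMem_of_ncard_lt_ncard (hX.ncard_le.trans_lt (hX.four_le w hwX))
      exact ⟨y, hyX, hy.ne'⟩
    · exact ⟨w, hwX, hws⟩
  obtain ⟨w, hwX, -, hlt | ⟨hsw, hwx, -⟩⟩ :=
    hG.exists_ncard_lt_of_adj hxs.symm hx hX.isClique hX.ncard_le hne
  · exact absurd (hX.four_le w hwX) hlt.not_ge
  · exact ⟨w, hwX, hwx.symm, hsw⟩

theorem exists_adj_of_mem (hX : IsExemptClique G X) (hx : x ∈ X) : ∃ s, G.Adj x s := by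
  by_contra! hiso
  obtain ⟨y, hyX⟩ := hX.exists_notMem
  obtain ⟨w, ⟨-, hwX⟩, hlt⟩ := hG.exists_ncard_lt_of_isMinorOf (v := x) (.induce G {x}ᶜ)
    (by simp) hX.isClique hX.ncard_le ⟨y, (ne_of_mem_of_not_mem hx hyX).symm, hyX⟩
  have hsub : G.neighborSet w ⊆ {x}ᶜ := by
    rintro _ hwx rfl
    exact hiso w hwx.symm
  rw [Set.inter_eq_left.2 hsub] at hlt
  exact (hX.four_le w hwX).not_gt hlt

theorem ncard_lt_ncard_neighborSet (hX : IsExemptClique G X) (hx : x ∈ X) :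
    X.ncard < (G.neighborSet x).ncard := by
  obtain ⟨s, hs⟩ := hG.exists_adj_of_mem hX hx
  obtain ⟨w, hwX, hxw, -⟩ := hG.exists_adj_adj_of_adj_mem hX hx hs
  obtain ⟨y, hyX, hxy, hwy⟩ := hG.exists_adj_adj_of_adj_mem hX hx hxw
  have hsub : insert w (insert y X) ⊆ insert x (G.neighborSet x) := by
    rintro z (rfl | rfl | hz)
    · exact .inr hxw
    · exact .inr hxy
    · exact (eq_or_ne z x).imp id fun hzx ↦ hX.isClique hx hz hzx.symm
  have hle := Set.ncard_le_ncard hsub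
  rw [Set.ncard_insert_of_notMem (by simp [hwy.ne, hwX]), Set.ncard_insert_of_notMem hyX,
    Set.ncard_insert_of_notMem (by simp)] at hle
  omega

theorem exists_subset_pair (hX : IsExemptClique G X) (hx : x ∈ X) (hcard : X.ncard ≤ 2) :
    ∃ s, G.Adj x s ∧ X ⊆ {x, s} := by
  by_cases h : ∃ s ∈ X, s ≠ x
  · obtain ⟨s, hs, hsx⟩ := h
    refine ⟨s, hX.isClique hx hs hsx.symm, ?_⟩
    refine (Set.eq_of_subset_of_ncard_le (Set.pair_subset hx hs) ?_).ge
    rwa [Set.ncard_pair hsx.symm]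
  · push Not at h
    obtain ⟨s, hs⟩ := hG.exists_adj_of_mem hX hx
    exact ⟨s, hs, fun y hy ↦ .inl (h y hy)⟩

theorem four_le_ncard_neighborSet (v : V) : 4 ≤ (G.neighborSet v).ncard := by
  obtain ⟨X, hX⟩ := hG.exists_isExemptClique
  by_cases hv : v ∈ X
  · by_cases hcard : X.ncard ≤ 2
    · obtain ⟨s, hvs, hXs⟩ := hG.exists_subset_pair hX hv hcard
      obtain ⟨w, hwX, hvw, hsw⟩ := hG.exists_adj_adj_of_adj_mem hX hv hvs
      have htri : ({v, s, w} : Set V).ncard = 3 :=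
        Set.ncard_eq_three.2 ⟨v, s, w, hvs.ne, hvw.ne, hsw.ne, rfl⟩
      obtain ⟨y, -, hy⟩ :=
        Set.exists_mem_notMem_of_ncard_lt_ncard (htri.trans_lt (hX.four_le w hwX))
      have hX' : IsExemptClique G {v, s, w} := hX.mono (hXs.trans (by grind))
        (by simp [Set.pairwise_insert, IsClique, hvs, hvw, hsw, G.adj_comm]) htri.le ⟨y, hy⟩
      have := hG.ncard_lt_ncard_neighborSet hX' (.inl rfl)
      omega
    · have := hG.ncard_lt_ncard_neighborSet hX hv
      omega
  · exact hX.four_le v hv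

theorem two_lt_ncard_commonNeighbors_of_isClique (huv : G.Adj u v)
    (hC : G.IsClique (G.commonNeighbors u v)) : 2 < (G.commonNeighbors u v).ncard := by
  by_contra! hcard
  have hcard' : (insert v (G.commonNeighbors u v)).ncard ≤ 3 :=
    (Set.ncard_insert_le _ _).trans (by omega)
  obtain ⟨y, huy, hy⟩ := Set.exists_mem_notMem_of_ncard_lt_ncard
    (hcard'.trans_lt (hG.four_le_ncard_neighborSet u))
  obtain ⟨w, hw, -, hlt | ⟨huw, hwv, -⟩⟩ := hG.exists_ncard_lt_of_adj huv (Set.mem_insert _ _)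
    (hC.insert fun w hw _ ↦ hw.2) hcard' ⟨y, hy, huy.ne'⟩
  · exact (hG.four_le_ncard_neighborSet w).not_gt hlt
  · exact hw (.inr ⟨huw, hwv.symm⟩)

theorem two_le_ncard_commonNeighbors (huv : G.Adj u v) : 2 ≤ (G.commonNeighbors u v).ncard := by
  by_contra! hcard
  have hC : (G.commonNeighbors u v).Subsingleton := Set.ncard_le_one_iff_subsingleton.1 (by omega)
  have := hG.two_lt_ncard_commonNeighbors_of_isClique huv (hC.pairwise _)
  omega

theorem exists_ncard_neighborSet_eq_four : ∃ v, (G.neighborSet v).ncard = 4 := by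
  obtain ⟨X, hX⟩ := hG.exists_isExemptClique
  obtain ⟨u, -⟩ := hX.exists_notMem
  have hu := hG.four_le_ncard_neighborSet u
  obtain ⟨v, huv⟩ := Set.nonempty_of_ncard_ne_zero (s := G.neighborSet u) (by omega)
  obtain ⟨y, huy, hy⟩ := Set.exists_mem_notMem_of_ncard_lt_ncard (s := {v})
    (t := G.neighborSet u) (by rw [Set.ncard_singleton]; omega)
  obtain ⟨w, -, -, hle⟩ := hG.exists_ncard_lt_of_adj huv (Set.mem_singleton v)
    (by simp) (by simp) ⟨y, hy, huy.ne'⟩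
  exact ⟨w, by have := hG.four_le_ncard_neighborSet w; omega⟩

/- Contracting `v` into `p` turns the path `p q r` into a triangle, which is then exempt in the
subgraph induced on `K`. -/
theorem not_forall_neighborSet_subset {p q r : V} (hv : v ∉ K) (hvp : G.Adj v p) (hvr : G.Adj v r)
    (hpq : G.Adj p q) (hqr : G.Adj q r) (hpr : p ≠ r) (hne : (K \ {p, q, r}).Nonempty) :
    ¬ ∀ w ∈ K \ {p, q, r}, G.neighborSet w ⊆ K := by
  intro hsub
  have hle := le_absorb G v p
  have hpr' : (absorb G v p).Adj p r := (absorb_adj_of_adj hvr hpr.symm).symm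
  have htri : (absorb G v p).IsClique {p, q, r} := by
    simp [Set.pairwise_insert, IsClique, hle hpq, hle hqr, hpr', SimpleGraph.adj_comm]
  have hcard : ({p, q, r} : Set V).ncard = 3 :=
    Set.ncard_eq_three.2 ⟨p, q, r, hpq.ne, hpr, hqr.ne, rfl⟩
  obtain ⟨w, hw, hlt⟩ := hG.exists_ncard_lt_of_isMinorOf (isMinorOf_induce_absorb hvp hv) hv htri
    hcard.le hne
  have hsub' : G.neighborSet w ⊆ (absorb G v p).neighborSet w ∩ K :=
    fun x hx ↦ ⟨hle hx, hsub w hw hx⟩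
  exact (hG.four_le_ncard_neighborSet w).not_gt ((Set.ncard_le_ncard hsub').trans_lt hlt)

theorem exists_adj_of_neighborSet_eq {p q r z : V} {R : Set V}
    (hN : G.neighborSet v = {z, p, q, r}) (hpq : G.Adj p q) (hqr : G.Adj q r) (hpr : p ≠ r)
    (hR : R.Nonempty) (hvR : v ∉ R) (hNR : ∀ w ∈ R, ¬ G.Adj v w)
    (hclosed : ∀ w ∈ R, ∀ y, G.Adj w y → y ∈ R ∨ G.Adj v y) : ∃ x ∈ R, G.Adj z x := by
  by_contra! hz
  have hmem (y : V) : G.Adj v y ↔ y = z ∨ y = p ∨ y = q ∨ y = r := by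
    rw [← mem_neighborSet, hN]
    rfl
  obtain ⟨x, hx⟩ := hR
  have hvp := (hmem p).2 (by simp)
  have hvq := (hmem q).2 (by simp)
  have hvr := (hmem r).2 (by simp)
  refine hG.not_forall_neighborSet_subset (K := R ∪ {p, q, r}) (v := v) ?_ hvp hvr hpq hqr hpr
    ⟨x, .inl hx, ?_⟩ ?_
  · simp [hvR, hvp.ne, hvq.ne, hvr.ne]
  · rintro (rfl | rfl | rfl) <;> exact hNR _ hx ‹_›
  · rintro w ⟨hw, hw'⟩ y hwy
    have hwR : w ∈ R := hw.resolve_right hw'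
    refine (hclosed w hwR y hwy).imp id fun hvy ↦ ((hmem y).1 hvy).resolve_left ?_
    rintro rfl
    exact hz w hwR hwy.symm

theorem exists_neighborSet_eq_of_not_adj {a c : V} (hv : (G.neighborSet v).ncard = 4)
    (hva : G.Adj v a) (hvc : G.Adj v c) (hac : a ≠ c) (hnac : ¬ G.Adj a c) :
    ∃ b d, b ≠ d ∧ G.neighborSet v = {a, b, c, d} ∧
      G.Adj a b ∧ G.Adj a d ∧ G.Adj c b ∧ G.Adj c d := by
  have hsub : {a, c} ⊆ G.neighborSet v := Set.pair_subset hva hvc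
  have hcard : (G.neighborSet v \ {a, c}).ncard = 2 := by
    rw [Set.ncard_sdiff hsub, Set.ncard_pair hac, hv]
  have hcommon {e} (he : G.Adj v e) (hea : ¬ G.Adj e a) (hec : ¬ G.Adj e c) :
      G.commonNeighbors v e = G.neighborSet v \ {a, c} := by
    refine Set.eq_of_subset_of_ncard_le ?_ (hcard.trans_le (hG.two_le_ncard_commonNeighbors he))
    rintro y ⟨hvy, hey⟩
    refine ⟨hvy, ?_⟩
    rintro (rfl | rfl)
    · exact hea hey
    · exact hec hey
  obtain ⟨b, d, hbd, hrest⟩ := Set.ncard_eq_two.1 hcard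
  have ha := (hcommon hva (G.loopless.irrefl a) hnac).trans hrest
  have hc := (hcommon hvc (mt Adj.symm hnac) (G.loopless.irrefl c)).trans hrest
  refine ⟨b, d, hbd, ?_, (ha.ge (.inl rfl)).2, (ha.ge (.inr rfl)).2, (hc.ge (.inl rfl)).2,
    (hc.ge (.inr rfl)).2⟩
  rw [← Set.union_sdiff_cancel hsub, hrest]
  grind

theorem exists_connected_induce_adj {a b c d : V} (hbd : b ≠ d) (hac : a ≠ c)
    (hN : G.neighborSet v = {a, b, c, d}) (hnac : ¬ G.Adj a c) (hab : G.Adj a b) (had : G.Adj a d)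
    (hcb : G.Adj c b) (hcd : G.Adj c d) :
    ∃ R : Set V, (G.induce R).Connected ∧ v ∉ R ∧
      ∀ z ∈ G.neighborSet v, z ∉ R ∧ ∃ x ∈ R, G.Adj z x := by
  have hlt : ({v, b, d} : Set V).ncard < (G.neighborSet a).ncard := by
    have h₁ := hG.four_le_ncard_neighborSet a
    have h₂ := Set.ncard_insert_le v {b, d}
    rw [Set.ncard_pair hbd] at h₂
    omega
  obtain ⟨x, hax, hx⟩ := Set.exists_mem_notMem_of_ncard_lt_ncard hlt
  have hxK : x ∉ insert v (G.neighborSet v) := by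
    have := hax.ne
    have : x ≠ c := fun h ↦ hnac (h ▸ hax)
    rw [hN]
    grind
  obtain ⟨R, hR, hdisj, hclosed⟩ := exists_connected_induce_disjoint (G := G) hxK
  have hK {y} (hy : y ∈ R) : y ≠ v ∧ ¬ G.Adj v y := by
    simpa using Set.disjoint_left.1 hdisj hy
  have hvR : v ∉ R := fun h ↦ (hK h).1 rfl
  have hclosed' (w) (hw : w ∈ R) (y) (hwy : G.Adj w y) : y ∈ R ∨ G.Adj v y := by
    refine (hclosed w hw y hwy).imp id fun hy ↦ hy.resolve_left ?_
    rintro rfl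
    exact (hK hw).2 hwy.symm
  have hadj {z p q r} (hN : G.neighborSet v = {z, p, q, r}) (hpq : G.Adj p q) (hqr : G.Adj q r)
      (hpr : p ≠ r) : ∃ x ∈ R, G.Adj z x :=
    hG.exists_adj_of_neighborSet_eq hN hpq hqr hpr (Set.nonempty_coe_sort.1 hR.nonempty) hvR
      (fun _ hw ↦ (hK hw).2) hclosed'
  refine ⟨R, hR, hvR, fun z hz ↦ ⟨fun hzR ↦ (hK hzR).2 hz, ?_⟩⟩
  rw [hN] at hz
  obtain rfl | rfl | rfl | rfl := hz
  · exact hadj hN hcb.symm hcd hbd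
  · exact hadj (hN.trans (by grind)) had hcd.symm hac
  · exact hadj (hN.trans (by grind)) hab.symm had hbd
  · exact hadj (hN.trans (by grind)) hab hcb.symm hac

theorem isMinorOf_octahedron (hv : (G.neighborSet v).ncard = 4)
    (hclique : ¬ G.IsClique (G.neighborSet v)) :
    IsMinorOf (completeMultipartiteGraph fun _ : Fin 3 ↦ Fin 2) G := by
  simp only [IsClique, Set.Pairwise, not_forall] at hclique
  obtain ⟨a, hva, c, hvc, hac, hnac⟩ := hclique
  obtain ⟨b, d, hbd, hN, hab, had, hcb, hcd⟩ :=
    hG.exists_neighborSet_eq_of_not_adj hv hva hvc hac hnac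
  obtain ⟨R, hR, hvR, hNR⟩ := hG.exists_connected_induce_adj hbd hac hN hnac hab had hcb hcd
  have hvb : b ∈ G.neighborSet v := by simp [hN]
  have hvd : d ∈ G.neighborSet v := by simp [hN]
  have hs : ∀ i, ![a, c] i ∈ G.neighborSet v := Fin.forall_fin_two.2 ⟨hva, hvc⟩
  have ht : ∀ i, ![b, d] i ∈ G.neighborSet v := Fin.forall_fin_two.2 ⟨hvb, hvd⟩
  refine isMinorOf_octahedron_of_adj (s := ![a, c]) (t := ![b, d]) ?_ ?_ ?_ hs ht hR hvR
    (fun i ↦ (hNR _ (hs i)).1) (fun i ↦ (hNR _ (ht i)).1) (fun i ↦ (hNR _ (hs i)).2)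
    fun i ↦ (hNR _ (ht i)).2
  · exact List.nodup_ofFn.1 (by simpa using hac)
  · exact List.nodup_ofFn.1 (by simpa using hbd)
  · simp [Fin.forall_fin_two, hab, had, hcb, hcd]

theorem isMinorOf_top_or_isMinorOf_octahedron :
    IsMinorOf (⊤ : SimpleGraph (Fin 5)) G ∨
      IsMinorOf (completeMultipartiteGraph fun _ : Fin 3 ↦ Fin 2) G := by
  obtain ⟨v, hv⟩ := hG.exists_ncard_neighborSet_eq_four
  by_cases hclique : G.IsClique (G.neighborSet v)
  · have hminor := isMinorOf_top_of_isClique_neighborSet hclique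
    rw [hv] at hminor
    exact .inl hminor
  · exact .inr (hG.isMinorOf_octahedron hv hclique)

end IsExemptMinimal

end Exempt

section Obstructions

variable {U V W : Type}

theorem three_lt_minDegC_iff [Fintype V] {G : SimpleGraph V} :
    3 < minDegC G ↔ IsExemptClique G ∅ := by
  classical
  have hmin : minDegC G = G.minDegree := by
    unfold minDegC
    congr!
  have hdeg (v : V) : (G.neighborSet v).ncard = G.degree v := by
    rw [Set.ncard_eq_toFinset_card', ← neighborFinset_def, card_neighborFinset_eq_degree]
  rw [hmin, isExemptClique_empty_iff]
  constructor
  · intro h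
    refine ⟨?_, fun v ↦ hdeg v ▸ h.trans_le (G.minDegree_le_degree v)⟩
    by_contra hV
    rw [not_nonempty_iff] at hV
    rw [minDegree_of_subsingleton] at h
    omega
  · rintro ⟨_, h⟩
    exact G.le_minDegree_of_forall_le_degree 4 fun v ↦ hdeg v ▸ h v

theorem three_lt_minDegC_top : 3 < minDegC (⊤ : SimpleGraph (Fin 5)) := by
  refine three_lt_minDegC_iff.2 (isExemptClique_empty_iff.2 ⟨inferInstance, fun v ↦ ?_⟩)
  rw [neighborSet_top, Set.ncard_compl]
  simp

theorem three_lt_minDegC_octahedron :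
    3 < minDegC (completeMultipartiteGraph fun _ : Fin 3 ↦ Fin 2) := by
  refine three_lt_minDegC_iff.2 (isExemptClique_empty_iff.2 ⟨inferInstance, fun v ↦ ?_⟩)
  have hN : (completeMultipartiteGraph fun _ : Fin 3 ↦ Fin 2).neighborSet v =
      ↑(Finset.univ.filter fun w : (_ : Fin 3) × Fin 2 ↦ v.1 ≠ w.1) := by
    ext w
    simp
  rw [hN, Set.ncard_coe_finset]
  clear hN
  revert v
  decide

theorem not_isMinorOf_top_octahedron :
    ¬ IsMinorOf (⊤ : SimpleGraph (Fin 5)) (completeMultipartiteGraph fun _ : Fin 3 ↦ Fin 2) := by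
  intro h
  have := h.two_mul_card_le_of_coloring (completeMultipartiteGraph.coloring _)
  simp at this

theorem not_isMinorOf_octahedron_top :
    ¬ IsMinorOf (completeMultipartiteGraph fun _ : Fin 3 ↦ Fin 2) (⊤ : SimpleGraph (Fin 5)) := by
  intro h
  have := h.card_le
  simp at this

theorem memD_three_iff {G : SimpleGraph V} :
    MemD 3 G ↔ ¬ IsMinorOf (⊤ : SimpleGraph (Fin 5)) G ∧
      ¬ IsMinorOf (completeMultipartiteGraph fun _ : Fin 3 ↦ Fin 2) G := by
  refine ⟨fun hG ↦ ⟨fun h ↦ (hG _ _ h).not_gt three_lt_minDegC_top,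
    fun h ↦ (hG _ _ h).not_gt three_lt_minDegC_octahedron⟩, fun ⟨hK, hO⟩ W _ H hH ↦ ?_⟩
  by_contra! hlt
  obtain ⟨U, _, J, hJ, hmin⟩ := (three_lt_minDegC_iff.1 hlt).exists_isExemptMinimal
  exact hmin.isMinorOf_top_or_isMinorOf_octahedron.elim (fun h ↦ hK (h.trans (hJ.trans hH)))
    fun h ↦ hO (h.trans (hJ.trans hH))

theorem MemDHat.nonempty_iso [Finite W] {k : ℕ} {G : SimpleGraph V} {P : SimpleGraph W}
    (hG : MemDHat k G) (hP : ¬ MemD k P) (hPG : IsMinorOf P G) : Nonempty (G ≃g P) := by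
  have := Fintype.ofFinite W
  by_contra h
  exact hP (hG.2 W P ⟨hPG, fun ⟨e⟩ ↦ h ⟨e.symm⟩⟩)

theorem memDHat_of_forall_isMinorOf [Finite V] {k : ℕ} {G : SimpleGraph V} (hG : ¬ MemD k G)
    (h : ∀ (W : Type) (H : SimpleGraph W), IsMinorOf H G → ¬ MemD k H → IsMinorOf G H) :
    MemDHat k G :=
  ⟨hG, fun W _ H ⟨hHG, hne⟩ ↦
    by_contra fun hH ↦ hne (hHG.nonempty_iso_of_isMinorOf (h W H hHG hH))⟩

theorem memDHat_iff_of_memD_iff [Finite W] [Finite U] {k : ℕ} {G : SimpleGraph V}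
    {P : SimpleGraph W} {Q : SimpleGraph U}
    (hD : ∀ {X : Type} {H : SimpleGraph X}, MemD k H ↔ ¬ IsMinorOf P H ∧ ¬ IsMinorOf Q H)
    (hPQ : ¬ IsMinorOf P Q) (hQP : ¬ IsMinorOf Q P) :
    MemDHat k G ↔ Nonempty (G ≃g P) ∨ Nonempty (G ≃g Q) := by
  have hnot {X : Type} {H : SimpleGraph X} : ¬ MemD k H ↔ IsMinorOf P H ∨ IsMinorOf Q H := by
    rw [hD]
    tauto
  refine ⟨fun hG ↦ (hnot.1 hG.1).imp (hG.nonempty_iso (hnot.2 (.inl (.refl P))))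
    (hG.nonempty_iso (hnot.2 (.inr (.refl Q)))), ?_⟩
  rintro (⟨⟨e⟩⟩ | ⟨⟨e⟩⟩)
  · have := Finite.of_equiv _ e.toEquiv.symm
    refine memDHat_of_forall_isMinorOf (hnot.2 (.inl (.of_iso e.symm))) fun X H hHG hH ↦ ?_
    exact (IsMinorOf.of_iso e).trans
      ((hnot.1 hH).resolve_right fun h ↦ hQP (h.trans (hHG.trans (.of_iso e))))
  · have := Finite.of_equiv _ e.toEquiv.symm
    refine memDHat_of_forall_isMinorOf (hnot.2 (.inr (.of_iso e.symm))) fun X H hHG hH ↦ ?_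
    exact (IsMinorOf.of_iso e).trans
      ((hnot.1 hH).resolve_left fun h ↦ hPQ (h.trans (hHG.trans (.of_iso e))))

theorem memDHat_three_iff_general (G : SimpleGraph V) :
    MemDHat 3 G ↔ Nonempty (G ≃g (⊤ : SimpleGraph (Fin 5))) ∨
      Nonempty (G ≃g completeMultipartiteGraph fun _ : Fin 3 ↦ Fin 2) :=
  memDHat_iff_of_memD_iff memD_three_iff not_isMinorOf_top_octahedron not_isMinorOf_octahedron_top

end Obstructions

/-- Proposition 2.3: `D̂_3 = {K_5, K_{2,2,2}}`. -/
theorem memDHat_three_iff (V : Type) [Fintype V] (G : SimpleGraph V) :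
    MemDHat 3 G ↔
      Nonempty (G ≃g (⊤ : SimpleGraph (Fin 5))) ∨
      Nonempty (G ≃g completeMultipartiteGraph (fun _ : Fin 3 => Fin 2)) :=
  memDHat_three_iff_general G
end

section
/- Let k ≥ 0 and let G be a graph. Let L(G) be the set of vertices of minimum degree in G and let p = |V(G)| − |L(G)|. Suppose that: the minimum degree of G is k+1; |L(G)| < (4/3)(k + 2 − p); the set V(G) − L(G) is an independent set of G; and every vertex in V(G) − L(G) is adjacent to every vertex of L(G). Then G ∈ D̂_k. -/
open SimpleGraph

/-!
Forget that branch sets are connected: what remains of a minor `H` of `G` is a partial map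
`φ : V → Option W` whose fibres realise the edges of `H`, and such maps compose as Kleisli arrows.

Write `n = |V|`, `r = n - k - 2` for the largest degree of the complement `Gᶜ`, and let `H` be a
minor with `n - t` vertices and minimum degree at least `k + 1`; thus `t ≤ r`, and the size
hypothesis says `4 r < |L|`. At most `2 t` vertices are not alone in their fibre. A vertex of `L`
that is alone in its fibre has degree `r` in `Gᶜ`, its image has degree at most `r - t` in `Hᶜ`, and
non-adjacent singleton fibres have non-adjacent images; so at least `t` of its `Gᶜ`-neighbours are
not alone. Counting these `Gᶜ`-edges from both sides gives `(|L| - 2 t) t ≤ 2 t r`, hence `t = 0`.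

A minor on all `n` vertices is a spanning subgraph. No edge meeting `L` can be missing from it,
since a degree would drop below `k + 1`, and all edges of `G` meet `L` because the other vertices
are independent.
-/

open Finset Function

lemma degC_eq_degree {V : Type} [Fintype V] (G : SimpleGraph V) [DecidableRel G.Adj] (v : V) :
    degC G v = G.degree v := by
  unfold degC
  convert rfl

lemma minDegC_eq_minDegree {V : Type} [Fintype V] (G : SimpleGraph V) [DecidableRel G.Adj] :
    minDegC G = G.minDegree := by
  unfold minDegC
  convert rfl

lemma isMinorOf_refl {V : Type} (G : SimpleGraph V) : IsMinorOf G G := by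
  refine ⟨fun v => {v}, Set.singleton_nonempty, fun u v huv => by simpa using huv, fun v => ?_,
    fun u v huv => ⟨u, rfl, v, rfl, huv⟩⟩
  have : Nonempty ({v} : Set V) := ⟨⟨v, rfl⟩⟩
  exact ⟨SimpleGraph.Preconnected.of_subsingleton⟩

lemma not_memD_of_lt_minDegC {k : ℕ} {V : Type} [Fintype V] {G : SimpleGraph V}
    (h : k < minDegC G) : ¬ MemD k G :=
  fun hG => (hG V G (isMinorOf_refl G)).not_gt h

lemma nonempty_of_minDegree_pos {V : Type*} [Fintype V] {G : SimpleGraph V} [DecidableRel G.Adj]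
    (h : 0 < G.minDegree) : Nonempty V := by
  by_contra hV
  rw [not_nonempty_iff] at hV
  exact h.ne' G.minDegree_of_subsingleton

lemma degree_compl_add_degree_add_one {V : Type*} [Fintype V] [DecidableEq V] (G : SimpleGraph V)
    [DecidableRel G.Adj] (v : V) : Gᶜ.degree v + G.degree v + 1 = Fintype.card V := by
  have := G.degree_compl v
  have := G.degree_lt_card_verts v
  lia

section BijectiveHom

variable {W V : Type*} [Fintype W] [Fintype V] {H : SimpleGraph W} {G : SimpleGraph V}
  [DecidableRel H.Adj] [DecidableRel G.Adj] {f : H →g G} {u w : W}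

lemma adj_of_map_adj_of_degree_le (hf : Injective f) (hdeg : G.degree (f u) ≤ H.degree u)
    (h : G.Adj (f u) (f w)) : H.Adj u w := by
  classical
  have hsub : (H.neighborFinset u).image f ⊆ G.neighborFinset (f u) := by
    intro y hy
    obtain ⟨x, hx, rfl⟩ := mem_image.mp hy
    simpa using f.map_adj (by simpa using hx)
  have heq : (H.neighborFinset u).image f = G.neighborFinset (f u) :=
    eq_of_subset_of_card_le hsub (by simpa [card_image_of_injective _ hf] using hdeg)
  have hw : f w ∈ (H.neighborFinset u).image f := by simpa [heq] using h
  simpa [hf.eq_iff] using hw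

lemma map_adj_iff_of_minDegree_le (hf : Injective f) (hdeg : G.minDegree ≤ H.minDegree)
    (hind : G.IsIndepSet {v | G.degree v ≠ G.minDegree}) :
    G.Adj (f u) (f w) ↔ H.Adj u w := by
  have hdegree (x : W) (hx : G.degree (f x) = G.minDegree) : G.degree (f x) ≤ H.degree x :=
    hx.trans_le (hdeg.trans (H.minDegree_le_degree x))
  refine ⟨fun h => ?_, f.map_adj⟩
  by_cases hu : G.degree (f u) = G.minDegree
  · exact adj_of_map_adj_of_degree_le hf (hdegree u hu) h
  by_cases hw : G.degree (f w) = G.minDegree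
  · exact (adj_of_map_adj_of_degree_le hf (hdegree w hw) h.symm).symm
  · exact absurd h (hind hu hw h.ne)

end BijectiveHom

section Fibers

variable {W V : Type*}

lemma exists_injective_section {φ : V → Option W} (hφ : ∀ w, ∃ v, φ v = some w) :
    ∃ g : W → V, Injective g ∧ ∀ w, φ (g w) = some w := by
  choose g hg using hφ
  exact ⟨g, .of_comp (f := φ) (by simpa [comp_def, hg] using Option.some_injective W), hg⟩

/-- The vertex `v` is alone in its fibre under the partial map `φ`, i.e. it forms a singleton
branch set; a vertex on which `φ` is undefined is not. Non-adjacency of two such vertices carries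
over to the minor. -/
def IsSingletonFiber (φ : V → Option W) (v : V) : Prop :=
  ∃ w, φ ⁻¹' {some w} = {v}

lemma sum_card_filter_eq_some_le [Fintype W] [DecidableEq W] (φ : V → Option W) (s : Finset V) :
    ∑ w, #{v ∈ s | φ v = some w} ≤ #s := by
  rw [card_eq_sum_card_fiberwise (f := φ) (t := univ) (by simp), Fintype.sum_option]
  exact Nat.le_add_left _ _

lemma two_mul_card_le_card_add_card_isSingletonFiber [Fintype W] [Fintype V] (φ : V → Option W)
    [DecidablePred (IsSingletonFiber φ)] (hφ : ∀ w, ∃ v, φ v = some w) :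
    2 * Fintype.card W ≤ Fintype.card V + #{v | IsSingletonFiber φ v} := by
  classical
  have hfiber (w : W) : 2 ≤ #{v | φ v = some w} +
      #{v ∈ ({v | IsSingletonFiber φ v} : Finset V) | φ v = some w} := by
    obtain ⟨v, hv⟩ := hφ w
    have hpos : 0 < #{v | φ v = some w} := card_pos.mpr ⟨v, by simpa using hv⟩
    by_cases hone : #{v | φ v = some w} = 1
    · obtain ⟨v', hv'⟩ := card_eq_one.mp hone
      have hsolo : φ ⁻¹' {some w} = {v'} := by
        ext x
        simpa using Finset.ext_iff.mp hv' x
      have hmem : φ v' = some w := by simpa using hsolo.ge rfl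
      have : 0 < #{v ∈ ({v | IsSingletonFiber φ v} : Finset V) | φ v = some w} :=
        card_pos.mpr ⟨v', by simpa using ⟨⟨w, hsolo⟩, hmem⟩⟩
      lia
    · lia
  calc 2 * Fintype.card W = ∑ _w : W, 2 := by simp [mul_comm]
    _ ≤ ∑ w, #{v | φ v = some w} +
          ∑ w, #{v ∈ ({v | IsSingletonFiber φ v} : Finset V) | φ v = some w} := by
        rw [← sum_add_distrib]
        exact sum_le_sum fun w _ => hfiber w
    _ ≤ Fintype.card V + #{v | IsSingletonFiber φ v} :=
        add_le_add (sum_card_filter_eq_some_le φ univ) (sum_card_filter_eq_some_le φ _)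

end Fibers

/-- `φ` is a model of `H` in `G` as in the definition of a minor, except that branch sets need not
be connected: `φ v = some w` says that `v` lies in the branch set of `w`, and `φ v = none` that `v`
lies in no branch set. Encoding the family of branch sets as a partial map makes disjointness
automatic, and without connectivity models compose. -/
structure IsWeakModel {W V : Type*} (H : SimpleGraph W) (G : SimpleGraph V)
    (φ : V → Option W) : Prop where
  surj : ∀ w, ∃ v, φ v = some w
  adj : ∀ ⦃u w⦄, H.Adj u w → ∃ a b, φ a = some u ∧ φ b = some w ∧ G.Adj a b

lemma IsMinorOf.exists_isWeakModel {W V : Type} {H : SimpleGraph W} {G : SimpleGraph V}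
    (h : IsMinorOf H G) : ∃ φ, IsWeakModel H G φ := by
  classical
  obtain ⟨B, hne, hdisj, -, hadj⟩ := h
  let φ : V → Option W := fun v => if h : ∃ w, v ∈ B w then some h.choose else none
  have hφ (v : V) (w : W) (hv : v ∈ B w) : φ v = some w := by
    have h : ∃ w, v ∈ B w := ⟨w, hv⟩
    simp only [φ, dif_pos h, Option.some.injEq]
    by_contra hne
    exact Set.disjoint_left.mp (hdisj _ _ hne) h.choose_spec hv
  refine ⟨φ, fun w => ?_, fun u w huw => ?_⟩
  · obtain ⟨v, hv⟩ := hne w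
    exact ⟨v, hφ v w hv⟩
  · obtain ⟨a, ha, b, hb, hab⟩ := hadj huw
    exact ⟨a, b, hφ a u ha, hφ b w hb, hab⟩

namespace IsWeakModel

variable {U W V : Type*} {K : SimpleGraph U} {H : SimpleGraph W} {G : SimpleGraph V}
  {φ : V → Option W}

lemma comp {ψ : W → Option U} (hψ : IsWeakModel K H ψ) (hφ : IsWeakModel H G φ) :
    IsWeakModel K G (fun v => (φ v).bind ψ) := by
  refine ⟨fun u => ?_, fun u u' huu' => ?_⟩
  · obtain ⟨w, hw⟩ := hψ.surj u
    obtain ⟨v, hv⟩ := hφ.surj w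
    exact ⟨v, by simp [hv, hw]⟩
  · obtain ⟨w, w', hw, hw', hadj⟩ := hψ.adj huu'
    obtain ⟨a, b, ha, hb, hab⟩ := hφ.adj hadj
    exact ⟨a, b, by simp [ha, hw], by simp [hb, hw'], hab⟩

lemma adj_of_fiber_eq_singleton (hφ : IsWeakModel H G φ) {w x : W} {v u : V}
    (hw : φ ⁻¹' {some w} = {v}) (hx : φ ⁻¹' {some x} = {u}) (h : H.Adj w x) : G.Adj v u := by
  obtain ⟨a, b, ha, hb, hab⟩ := hφ.adj h
  obtain rfl : a = v := hw.le ha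
  obtain rfl : b = u := hx.le hb
  exact hab

variable [Fintype W] [Fintype V]

lemma card_le (hφ : IsWeakModel H G φ) : Fintype.card W ≤ Fintype.card V := by
  obtain ⟨g, hg, -⟩ := exists_injective_section hφ.surj
  exact Fintype.card_le_of_injective g hg

lemma exists_bijective_hom_of_card_eq (hφ : IsWeakModel H G φ)
    (hcard : Fintype.card W = Fintype.card V) : ∃ f : H →g G, Bijective f := by
  obtain ⟨g, hg, hgφ⟩ := exists_injective_section hφ.surj
  have hbij : Bijective g := (Fintype.bijective_iff_injective_and_card g).mpr ⟨hg, hcard⟩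
  have hfiber (w : W) : φ ⁻¹' {some w} = {g w} := by
    ext v
    obtain ⟨x, rfl⟩ := hbij.surjective v
    simp [hgφ, hg.eq_iff]
  exact ⟨⟨g, fun {u w} => hφ.adj_of_fiber_eq_singleton (hfiber u) (hfiber w)⟩, hbij⟩

variable [DecidableRel H.Adj] [DecidableRel G.Adj]

lemma degree_compl_le_card_bipartiteAbove_add [DecidableEq W] [DecidableEq V]
    [DecidablePred (IsSingletonFiber φ)] (hφ : IsWeakModel H G φ) {v : V} {w : W}
    (hw : φ ⁻¹' {some w} = {v}) :
    Gᶜ.degree v ≤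
      #(({u | ¬ IsSingletonFiber φ u} : Finset V).bipartiteAbove Gᶜ.Adj v) + Hᶜ.degree w := by
  obtain ⟨g, -, hgφ⟩ := exists_injective_section hφ.surj
  have hsub : Gᶜ.neighborFinset v ⊆
      ({u | ¬ IsSingletonFiber φ u} : Finset V).bipartiteAbove Gᶜ.Adj v ∪
        (Hᶜ.neighborFinset w).image g := by
    intro u hu
    have hvu : Gᶜ.Adj v u := by simpa only [mem_neighborFinset] using hu
    rw [mem_union]
    by_cases hsolo : IsSingletonFiber φ u
    · obtain ⟨x, hx⟩ := hsolo
      have hgx : g x = u := hx.le (hgφ x)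
      have hwx : w ≠ x := by
        rintro rfl
        exact hvu.ne (Set.singleton_injective (hw.symm.trans hx))
      have hnadj : ¬ H.Adj w x := fun h => hvu.2 (hφ.adj_of_fiber_eq_singleton hw hx h)
      exact .inr (mem_image.mpr ⟨x, (mem_neighborFinset ..).mpr ⟨hwx, hnadj⟩, hgx⟩)
    · exact .inl ((mem_bipartiteAbove _).mpr ⟨by simpa using hsolo, hvu⟩)
  calc Gᶜ.degree v ≤ _ := card_le_card hsub
    _ ≤ _ := card_union_le _ _
    _ ≤ _ := by grw [card_image_le, card_neighborFinset_eq_degree]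

lemma card_sub_card_le_card_bipartiteAbove [DecidableEq V] [DecidablePred (IsSingletonFiber φ)]
    (hφ : IsWeakModel H G φ) {v : V} (hv : IsSingletonFiber φ v)
    (hdeg : G.degree v ≤ H.minDegree) :
    Fintype.card V - Fintype.card W ≤
      #(({u | ¬ IsSingletonFiber φ u} : Finset V).bipartiteAbove Gᶜ.Adj v) := by
  classical
  obtain ⟨w, hw⟩ := hv
  have := hφ.degree_compl_le_card_bipartiteAbove_add hw
  have := degree_compl_add_degree_add_one G v
  have := degree_compl_add_degree_add_one H w
  have := H.minDegree_le_degree w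
  lia

theorem card_eq_of_minDegree_le [Nonempty W] (hφ : IsWeakModel H G φ) {r : ℕ}
    (hr : Fintype.card V = G.minDegree + r + 1) (hsize : 4 * r < #{v | G.degree v = G.minDegree})
    (hH : G.minDegree ≤ H.minDegree) : Fintype.card W = Fintype.card V := by
  classical
  by_contra hne
  set t := Fintype.card V - Fintype.card W
  have htpos : 0 < t := by have := hφ.card_le; lia
  have htr : t ≤ r := by have := H.minDegree_lt_card; lia
  set L : Finset V := {v | G.degree v = G.minDegree}
  set X : Finset V := {v | ¬ IsSingletonFiber φ v} with hX
  have hXcard : #X ≤ 2 * t := by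
    have := two_mul_card_le_card_add_card_isSingletonFiber φ hφ.surj
    have := card_filter_add_card_filter_not (s := (univ : Finset V)) (IsSingletonFiber φ)
    rw [card_univ] at this
    lia
  have habove : ∀ v ∈ L \ X, t ≤ #(X.bipartiteAbove Gᶜ.Adj v) := by
    intro v hv
    obtain ⟨hvL, hvX⟩ := mem_sdiff.mp hv
    exact hφ.card_sub_card_le_card_bipartiteAbove (by simpa [hX] using hvX)
      ((mem_filter.mp hvL).2.trans_le hH)
  have hbelow : ∀ x ∈ X, #((L \ X).bipartiteBelow Gᶜ.Adj x) ≤ r := by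
    intro x _
    have hsub : (L \ X).bipartiteBelow Gᶜ.Adj x ⊆ Gᶜ.neighborFinset x := fun u hu =>
      (mem_neighborFinset ..).mpr (mem_filter.mp hu).2.symm
    have hle : #((L \ X).bipartiteBelow Gᶜ.Adj x) ≤ Gᶜ.degree x := card_le_card hsub
    have := degree_compl_add_degree_add_one G x
    have := G.minDegree_le_degree x
    lia
  have hcount : #(L \ X) ≤ 2 * r := by
    refine Nat.le_of_mul_le_mul_right (c := t) ?_ htpos
    calc #(L \ X) * t ≤ #X * r := card_mul_le_card_mul Gᶜ.Adj habove hbelow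
      _ ≤ 2 * t * r := Nat.mul_le_mul_right r hXcard
      _ = 2 * r * t := by ring
  have hsplit : #L ≤ #(L \ X) + #X := card_le_card_sdiff_add_card
  lia

end IsWeakModel

lemma memDHat_of_forall_card_eq {k : ℕ} {V : Type} [Fintype V] {G : SimpleGraph V}
    [DecidableRel G.Adj] (hmin : G.minDegree = k + 1)
    (hind : G.IsIndepSet {v | G.degree v ≠ G.minDegree})
    (hcard : ∀ (U : Type) [Fintype U] (K : SimpleGraph U) [DecidableRel K.Adj] (φ : V → Option U),
      IsWeakModel K G φ → G.minDegree ≤ K.minDegree → Fintype.card U = Fintype.card V) :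
    MemDHat k G := by
  classical
  refine ⟨not_memD_of_lt_minDegC (by rw [minDegC_eq_minDegree]; lia), ?_⟩
  rintro W _ H ⟨hHG, hniso⟩ U _ K hKH
  by_contra! hK
  rw [minDegC_eq_minDegree] at hK
  obtain ⟨φ, hφ⟩ := hHG.exists_isWeakModel
  obtain ⟨ψ, hψ⟩ := hKH.exists_isWeakModel
  have hUV : Fintype.card U = Fintype.card V := hcard U K _ (hψ.comp hφ) (by lia)
  have hUW := hψ.card_le
  have hWV := hφ.card_le
  obtain ⟨e, he⟩ := hψ.exists_bijective_hom_of_card_eq (by lia)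
  obtain ⟨f, hf⟩ := hφ.exists_bijective_hom_of_card_eq (by lia)
  have hH : G.minDegree ≤ H.minDegree := by
    have := Hom.minDegree_mono he
    lia
  exact hniso ⟨⟨.ofBijective f hf, map_adj_iff_of_minDegree_le hf.injective hH hind⟩⟩

theorem vida_memDHat_general (k : ℕ) {V : Type} [Fintype V] (G : SimpleGraph V)
    (L : Set V) (hL : L = {v : V | degC G v = minDegC G})
    (p : ℕ) (hp : p = Fintype.card V - L.ncard)
    (hmin : minDegC G = k + 1)
    (hsize : 3 * (L.ncard : ℤ) < 4 * ((k : ℤ) + 2 - (p : ℤ)))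
    (hind : ∀ u v : V, u ∉ L → v ∉ L → ¬ G.Adj u v) :
    MemDHat k G := by
  classical
  simp only [degC_eq_degree, minDegC_eq_minDegree] at hL hmin
  subst hL
  refine memDHat_of_forall_card_eq hmin (fun u hu v hv _ => hind u v hu hv) ?_
  intro U _ K _ φ hφ hK
  have : Nonempty V := nonempty_of_minDegree_pos (G := G) (by lia)
  have : Nonempty U := nonempty_of_minDegree_pos (G := K) (by lia)
  obtain ⟨r, hr⟩ := Nat.exists_eq_add_of_lt G.minDegree_lt_card
  rw [Set.ncard_eq_toFinset_card', Set.toFinset_ofPred] at hp hsize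
  have := card_le_univ ({v | G.degree v = G.minDegree} : Finset V)
  exact hφ.card_eq_of_minDegree_le hr (by lia) hK

/-- Lemma 6.5: let `L(G)` be the set of minimum-degree vertices of `G` and
`p = |V(G)| - |L(G)|`. If `G` has minimum degree `k+1`, `|L(G)| < (4/3)(k+2-p)`,
`V(G) - L(G)` is an independent set, and every vertex of `V(G) - L(G)` is
adjacent to every vertex of `L(G)`, then `G ∈ D̂_k`. -/
theorem vida_memDHat (k : ℕ) {V : Type} [Fintype V] (G : SimpleGraph V)
    (L : Set V) (hL : L = {v : V | degC G v = minDegC G})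
    (p : ℕ) (hp : p = Fintype.card V - L.ncard)
    (hmin : minDegC G = k + 1)
    (hsize : 3 * (L.ncard : ℤ) < 4 * ((k : ℤ) + 2 - (p : ℤ)))
    (hind : ∀ u v : V, u ∉ L → v ∉ L → ¬ G.Adj u v)
    (hdom : ∀ u : V, u ∉ L → ∀ v ∈ L, G.Adj u v) :
    MemDHat k G :=
  vida_memDHat_general k G L hL p hp hmin hsize hind
end
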